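/- arXiv:2107.02593 — 2 statements merged into one kernel-verified Lean document; each statement's English description precedes it below -/
import Mathlib

section
/- Define g : ℝ × ℝ → ℝ by g(x, y) = x + (1 − y²)(1 − 2x) + 2y√((1 − y²)·x·(1 − x)). Then for all real numbers x, x', y, y' with 0 ≤ x ≤ x', 0 ≤ y' ≤ y ≤ 1, and x' ≤ y'², one has g(x, y) ≤ g(x', y'). -/
/-!
Writing `√x = sin a` and `y = cos b` with `a, b ∈ [0, π / 2]` turns `refG x y` into
`sin² (a + b)` (`refG_eq_sin_sq`). Increasing `x` increases `a`, decreasing `y` increases `b`, and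
`x' ≤ y'²` means that the larger sum of angles is at most `π / 2`, so monotonicity of `sin` on
`[0, π / 2]` gives the result.
-/

/-- The reference-technique function
`g(x, y) = x + (1 − y²)(1 − 2x) + 2y√((1 − y²)·x·(1 − x))`. -/
noncomputable def refG (x y : ℝ) : ℝ :=
  x + (1 - y ^ 2) * (1 - 2 * x) + 2 * y * Real.sqrt ((1 - y ^ 2) * x * (1 - x))

/-- The angle-addition form of `refG`: with `√x = sin a` and `y = cos b`, it is `sin² (a + b)`. -/
theorem refG_eq_sin_sq (x y : ℝ) (hx0 : 0 ≤ x) (hx1 : x ≤ 1) (hy0 : 0 ≤ y) (hy1 : y ≤ 1) :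
    refG x y = Real.sin (Real.arcsin (Real.sqrt x) + Real.arccos y) ^ 2 := by
  have hz : 0 ≤ 1 - y ^ 2 := by nlinarith
  have hs := Real.sqrt_nonneg x
  have hs1 : Real.sqrt x ≤ 1 := Real.sqrt_le_one.mpr hx1
  rw [Real.sin_add, Real.sin_arcsin (by linarith) hs1, Real.cos_arccos (by linarith) hy1,
    Real.cos_arcsin, Real.sin_arccos, Real.sq_sqrt hx0, refG,
    Real.sqrt_mul (mul_nonneg hz hx0), Real.sqrt_mul hz]
  have h1 := Real.sq_sqrt hx0
  have h2 := Real.sq_sqrt (sub_nonneg.mpr hx1)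
  have h3 := Real.sq_sqrt hz
  rw [add_sq, mul_pow, mul_pow, h1, h2, h3]
  ring

/-- Paper's Eq. (eq:gUL): on the nontrivial branch `x' ≤ y'²`, replacing `x` by
an upper bound `x'` and `y` by a lower bound `y'` can only increase `g`. -/
theorem refG_mono (x x' y y' : ℝ) (hx0 : 0 ≤ x) (hxx : x ≤ x')
    (hy'0 : 0 ≤ y') (hy'y : y' ≤ y) (hy1 : y ≤ 1) (hbranch : x' ≤ y' ^ 2) :
    refG x y ≤ refG x' y' := by
  have hx'1 : x' ≤ 1 := by nlinarith
  rw [refG_eq_sin_sq x y hx0 (hxx.trans hx'1) (hy'0.trans hy'y) hy1,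
    refG_eq_sin_sq x' y' (hx0.trans hxx) hx'1 hy'0 (hy'y.trans hy1)]
  have ha0 : 0 ≤ Real.arcsin (Real.sqrt x) := Real.arcsin_nonneg.mpr (Real.sqrt_nonneg x)
  have hb0 := Real.arccos_nonneg y
  have ha : Real.arcsin (Real.sqrt x) ≤ Real.arcsin (Real.sqrt x') :=
    Real.monotone_arcsin (Real.sqrt_le_sqrt hxx)
  have hb : Real.arccos y ≤ Real.arccos y' := Real.antitone_arccos hy'y
  -- The branch condition says `√x' ≤ y'`, so the larger angle sum stays within `[0, π / 2]`,
  -- where `sin` is nonnegative and increasing.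
  have htop : Real.arcsin (Real.sqrt x') + Real.arccos y' ≤ Real.pi / 2 := by
    have h := Real.monotone_arcsin (Real.sqrt_le_iff.mpr ⟨hy'0, hbranch⟩)
    rw [Real.arccos]
    linarith
  have hpi := Real.pi_pos
  exact pow_le_pow_left₀ (Real.sin_nonneg_of_nonneg_of_le_pi (by linarith) (by linarith))
    (Real.sin_le_sin_of_le_of_le_pi_div_two (by linarith) htop (by linarith)) 2
end

section
/- Define g : ℝ × ℝ → ℝ by g(x, y) = x + (1 − y²)(1 − 2x) + 2y√((1 − y²)·x·(1 − x)). Then for all real numbers x, y with 0 ≤ y ≤ 1 and 0 ≤ x ≤ y², one has g(x, y) ≤ 1, with equality g(y², y) = 1 when x = y². -/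
/-- On the branch `0 ≤ x ≤ y²` (with `0 ≤ y ≤ 1`) the reference-technique
function `g` is a valid probability bound: `g(x, y) ≤ 1`, with equality
`g(y², y) = 1` at `x = y²`. -/
theorem refG_le_one (x y : ℝ) (hy0 : 0 ≤ y) (hy1 : y ≤ 1)
    (hx0 : 0 ≤ x) (hxy : x ≤ y ^ 2) :
    refG x y ≤ 1 ∧ refG (y ^ 2) y = 1 := by
  have h1 : 0 ≤ 1 - y ^ 2 := by nlinarith
  have h2 : 0 ≤ 1 - x := by linarith
  unfold refG
  constructor
  · -- AM-GM: `1 - g(x, y) = (y√(1 - x) - √((1 - y²)x))²`.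
    rw [Real.sqrt_mul (mul_nonneg h1 hx0)]
    nlinarith [sq_nonneg (y * √(1 - x) - √((1 - y ^ 2) * x)),
      Real.sq_sqrt h2, Real.sq_sqrt (mul_nonneg h1 hx0)]
  · -- At `x = y²` the radicand is the square of `(1 - y²)y`, which is nonnegative.
    have h3 : (1 - y ^ 2) * y ^ 2 * (1 - y ^ 2) = ((1 - y ^ 2) * y) ^ 2 := by ring
    rw [h3, Real.sqrt_sq (mul_nonneg h1 hy0)]
    ring
end
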